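/- Let x, v ∈ ℝ² with ‖v‖ = 1, and let a finite nonempty family of lines be given by base points a_j ∈ ℝ² and unit direction vectors v_j ∈ ℝ² (j ranging over a finite index set), such that for every j the direction v_j is not parallel to v, i.e. cross(v, v_j) ≠ 0, where cross(u, w) = u₁w₂ − u₂w₁. Define the cost f(t) = Σ_j cross((x + t·v) − a_j, v_j)², which is the sum of squared Euclidean distances from the point x + t·v to each line {a_j + s·v_j : s ∈ ℝ}. Let t*_j = cross(a_j − x, v_j) / cross(v, v_j) denote the parameter at which the line t ↦ x + t·v meets the j-th line, and let w_j = cross(v, v_j)². Then f is a convex quadratic function of t whose unique global minimizer is t* = (Σ_j w_j · t*_j) / (Σ_j w_j). -/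

import Mathlib

open RealInnerProductSpace

/-- The 2D scalar cross product: `cross u w = u₁w₂ − u₂w₁`. -/
noncomputable def cross (u w : EuclideanSpace ℝ (Fin 2)) : ℝ := u 0 * w 1 - u 1 * w 0

/-- **Proposition 1.** For a target line `t ↦ x + t·v` (with `‖v‖ = 1`) and a finite nonempty
family of lines with base points `a j` and unit directions `vdir j`, none of which is parallel
to `v`, the total squared point-to-line distance
`f t = Σ_j cross((x + t·v) − a_j, v_j)²` is a convex quadratic function of `t` whose unique
global minimizer is the weighted average `t* = (Σ_j w_j t*_j) / (Σ_j w_j)`, where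
`t*_j = cross(a_j − x, v_j)/cross(v, v_j)` and `w_j = cross(v, v_j)²`. -/
theorem prop1_weighted_average_minimizer
    {ι : Type*} [Fintype ι] [Nonempty ι]
    (x v : EuclideanSpace ℝ (Fin 2)) (hv : ‖v‖ = 1)
    (a vdir : ι → EuclideanSpace ℝ (Fin 2))
    (hunit : ∀ j, ‖vdir j‖ = 1)
    (hnpar : ∀ j, cross v (vdir j) ≠ 0)
    (f : ℝ → ℝ)
    (hf : ∀ t, f t = ∑ j, (cross (x + t • v - a j) (vdir j)) ^ 2)
    (tstar : ι → ℝ)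
    (htstar : ∀ j, tstar j = cross (a j - x) (vdir j) / cross v (vdir j))
    (w : ι → ℝ) (hw : ∀ j, w j = (cross v (vdir j)) ^ 2)
    (tmin : ℝ) (htmin : tmin = (∑ j, w j * tstar j) / (∑ j, w j)) :
    (∃ A B C : ℝ, 0 < A ∧ ∀ t, f t = A * t ^ 2 + B * t + C) ∧
    ConvexOn ℝ Set.univ f ∧
    (∀ t, f tmin ≤ f t) ∧
    (∀ t, f t = f tmin → t = tmin) := by
  have hA : 0 < ∑ j, w j := by
    apply Finset.sum_pos
    · intro j _
      rw [hw]
      exact sq_pos_of_ne_zero (hnpar j)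
    · exact Finset.univ_nonempty
  have hS : ∑ j, w j * tstar j = (∑ j, w j) * tmin := by
    rw [htmin]; field_simp
  have key : ∀ t, f t = (∑ j, w j) * t ^ 2 + (-2 * ((∑ j, w j) * tmin)) * t
      + ∑ j, w j * tstar j ^ 2 := by
    intro t
    rw [hf, ← hS, Finset.sum_mul, Finset.mul_sum, Finset.sum_mul, ← Finset.sum_add_distrib,
      ← Finset.sum_add_distrib]
    refine Finset.sum_congr rfl fun j _ => ?_
    have h1 : cross (x + t • v - a j) (vdir j) = cross v (vdir j) * (t - tstar j) := by
      have h2 : cross v (vdir j) * tstar j = cross (a j - x) (vdir j) := by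
        rw [htstar, mul_div_cancel₀ _ (hnpar j)]
      rw [mul_sub, h2]
      simp only [cross, PiLp.add_apply, PiLp.sub_apply, PiLp.smul_apply, smul_eq_mul]
      ring
    rw [h1, hw]
    ring
  have diff : ∀ t, f t = f tmin + (∑ j, w j) * (t - tmin) ^ 2 := by
    intro t
    rw [key t, key tmin]
    ring
  refine ⟨⟨_, _, _, hA, key⟩, ⟨convex_univ, ?_⟩, ?_, ?_⟩
  · intro p _ q _ α β hα hβ hαβ
    simp only [smul_eq_mul]
    obtain rfl : β = 1 - α := by linarith
    rw [key, key p, key q]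
    have h := mul_nonneg (mul_nonneg hA.le (mul_nonneg hα hβ)) (sq_nonneg (p - q))
    linarith
  · intro t
    rw [diff t]
    have := mul_nonneg hA.le (sq_nonneg (t - tmin))
    linarith
  · intro t ht
    rw [diff t] at ht
    have h0 : (∑ j, w j) * (t - tmin) ^ 2 = 0 := by linarith
    rcases mul_eq_zero.mp h0 with h | h
    · exact absurd h hA.ne'
    · exact sub_eq_zero.mp (pow_eq_zero_iff two_ne_zero |>.mp h)
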